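/- If 0 ≤ δ and 4δ³ + 2δ² + 3δ < 1, then for every configuration C there exists an endpoint c of C such that δ ≤ λ(C|I_ω(c)) ≤ 1−δ for all ω > 0. -/

import Mathlib

open MeasureTheory Set Filter

/-- The relative measure of `H` in the interval `(p - ω, p + ω)`,
i.e. `λ(H | I_ω(p)) = λ(H ∩ I_ω(p)) / (2ω)`. -/
noncomputable def relMeasure (H : Set ℝ) (p ω : ℝ) : ℝ :=
  (volume (H ∩ Ioo (p - ω) (p + ω))).toReal / (2 * ω)

/-- A configuration: a finite increasing sequence `0 < a 0 < b 0 < a 1 < ⋯ < a (r-1) < b (r-1)`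
of positive reals. -/
structure Config where
  r : ℕ
  hr : 0 < r
  a : Fin r → ℝ
  b : Fin r → ℝ
  ha : ∀ i, 0 < a i
  hab : ∀ i, a i < b i
  hba : ∀ i j : Fin r, i < j → b i < a j

/-- The set `C = (-∞,0) ∪ ⋃ i (a i, b i)` associated to a configuration. -/
def Config.carrier (C : Config) : Set ℝ := Iio 0 ∪ ⋃ i, Ioo (C.a i) (C.b i)

/-- The endpoints of a configuration: `0` together with all the `a i` and `b i`. -/
def Config.endpoints (C : Config) : Set ℝ := insert 0 (range C.a ∪ range C.b)

/-!
Suppose that every endpoint is bad, choose a witnessing interval at each of them, and let the number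
of endpoints be minimal. Call an interval black-sparse or white-sparse if its density in that color
is less than `δ`. A greedy cover uses every point at most twice, so a stretch covered by
black-sparse intervals has black density at most `2δ / (1 + δ)`. Minimality bounds the total amounts
of black and of white in the window, and below the root of the cubic these bounds are incompatible
with black-sparse intervals meeting every black gap between endpoints. So there is a black gap that
no black-sparse interval meets and, by reflection, a white gap that no white-sparse interval meets.
The endpoints between these two gaps then form a smaller system all of whose endpoints are bad.
-/

section FiniteSubsets

variable {α β : Type*}

theorem gt_induction_on_finset [Preorder α] (N : Finset α) {P : α → Prop}
    (step : ∀ r, (∀ r' ∈ N, r < r' → P r') → P r) (r : α) : P r := by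
  classical
  induction hn : (N.filter (r < ·)).card using Nat.strong_induction_on generalizing r with
  | _ n ih =>
    refine step r fun r' hr' hlt => ih _ (hn ▸ Finset.card_lt_card ?_) r' rfl
    refine (Finset.ssubset_iff_of_subset fun e he => ?_).2
      ⟨r', Finset.mem_filter.2 ⟨hr', hlt⟩, fun h => lt_irrefl _ (Finset.mem_filter.1 h).2⟩
    have ⟨heN, hlt'⟩ := Finset.mem_filter.1 he
    exact Finset.mem_filter.2 ⟨heN, hlt.trans hlt'⟩

variable [LinearOrder α]

theorem exists_least_gt {N : Finset α} {x y : α} (hx : x ∈ N) (hyx : y < x) :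
    ∃ e ∈ N, y < e ∧ ∀ e' ∈ N, y < e' → e ≤ e' := by
  obtain ⟨e, he, hmin⟩ := (N.filter (y < ·)).exists_min_image id
    ⟨x, Finset.mem_filter.2 ⟨hx, hyx⟩⟩
  obtain ⟨heN, hye⟩ := Finset.mem_filter.1 he
  exact ⟨e, heN, hye, fun e' he' hye' => hmin e' (Finset.mem_filter.2 ⟨he', hye'⟩)⟩

theorem eq_of_forall_eq_of_notMem_Ioo (N : Finset α) {f : α → β} {u v : α} (huv : u ≤ v)
    (hf : ∀ r r', u ≤ r → r < r' → r' ≤ v → (∀ e ∈ N, e ∉ Ioo r r') → f r' = f r) :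
    f v = f u := by
  suffices h : ∀ r, u ≤ r → r ≤ v → f v = f r from h u le_rfl huv
  intro r
  induction r using gt_induction_on_finset (insert v N) with
  | step r ih =>
    intro hur hrv
    obtain rfl | hlt := hrv.eq_or_lt
    · rfl
    obtain ⟨e, he, hre, hmin⟩ := exists_least_gt (Finset.mem_insert_self v N) hlt
    have hev : e ≤ v := hmin v (Finset.mem_insert_self v N) hlt
    rw [ih e he hre (hur.trans hre.le) hev]
    exact hf r e hur hre hev fun e' he' hre' =>
      (hmin e' (Finset.mem_insert_of_mem he') hre'.1).not_gt hre'.2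

end FiniteSubsets

section Covering

variable {ι : Type*} {δ p q x y : ℝ} {F : ℝ → ℝ} {J : Finset ι} {l r : ι → ℝ}

theorem exists_right_end_maximal (h : ∃ j ∈ J, l j ≤ y ∧ y < r j) :
    ∃ j ∈ J, l j ≤ y ∧ y < r j ∧ ∀ k ∈ J, l k ≤ y → r k ≤ r j := by
  obtain ⟨j₀, hj₀J, hj₀l, hj₀r⟩ := h
  obtain ⟨j, hj, hmax⟩ := (J.filter (l · ≤ y)).exists_max_image r
    ⟨j₀, Finset.mem_filter.2 ⟨hj₀J, hj₀l⟩⟩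
  obtain ⟨hjJ, hjl⟩ := Finset.mem_filter.1 hj
  replace hmax : ∀ k ∈ J, l k ≤ y → r k ≤ r j := fun k hk hky =>
    hmax k (Finset.mem_filter.2 ⟨hk, hky⟩)
  exact ⟨j, hjJ, hjl, hj₀r.trans_le (hmax j₀ hj₀J hj₀l), hmax⟩

/- The induction follows a greedy cover from left to right, always adding the interval reaching
furthest, so that no point is covered more than twice. It has reached `y`, the part `[a, y]` is so
far covered at most once, and `K` is the slack collected to the left of `a`. -/
theorem exists_density_le_of_sweep (hδ0 : 0 ≤ δ) (hδ1 : δ ≤ 1) (hF : Monotone F)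
    (hlip : ∀ ⦃u v⦄, u ≤ v → F v - F u ≤ v - u)
    (hJ : ∀ j ∈ J, r j ≤ q ∧ F (r j) - F (l j) ≤ δ * (r j - l j)) (hxq : x ≤ q)
    (hmiss : ∀ u v, p ≤ u → u ≤ v → v ≤ x → (∀ j ∈ J, r j ≤ u ∨ v ≤ l j) → F v = F u)
    (y : ℝ) : ∀ a K, p ≤ a → a ≤ y → y ≤ q → (∀ j ∈ J, y < r j → a ≤ l j) →
      F y - F a ≤ δ * (y - a) + K →
      ∃ R ∈ Icc x q, (1 + δ) * (F R - F a) ≤ 2 * δ * (R - a) + K := by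
  classical
  have hδlip : ∀ ⦃u v⦄, u ≤ v → δ * (F v - F u) ≤ δ * (v - u) := fun u v huv =>
    mul_le_mul_of_nonneg_left (hlip huv) hδ0
  induction y using gt_induction_on_finset (insert x (J.image l) ∪ J.image r) with
  | step y ih =>
    intro a K hpa hay hyq ha hK
    have hδay := hδlip hay
    rcases le_or_gt x y with hxy | hyx
    · exact ⟨y, ⟨hxy, hyq⟩, by linarith⟩
    by_cases hcov : ∃ j ∈ J, l j ≤ y ∧ y < r j
    · obtain ⟨j, hj, hjl, hjr, hmax⟩ := exists_right_end_maximal hcov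
      obtain ⟨hjq, hjδ⟩ := hJ j hj
      have hδleft := hδlip (ha j hj hjr)
      have hδoverlap : δ * (F y - F (l j)) ≤ F y - F (l j) :=
        mul_le_of_le_one_left (sub_nonneg.2 (hF hjl)) hδ1
      obtain ⟨R, hR, hRδ⟩ := ih (r j) (Finset.mem_union_right _ (Finset.mem_image_of_mem r hj)) hjr
        y (F (r j) - F y - δ * (r j - y)) (hpa.trans hay) hjr.le hjq
        (fun k hk hjk => le_of_not_gt fun hky => (hmax k hk hky.le).not_gt hjk) (by linarith)
      exact ⟨R, hR, by linarith⟩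
    · push Not at hcov
      obtain ⟨y', hy', hyy', hmin⟩ :=
        exists_least_gt (Finset.mem_insert_self x (J.image l)) hyx
      have hy'x : y' ≤ x := hmin x (Finset.mem_insert_self _ _) hyx
      have hy'l : ∀ j ∈ J, y < l j → y' ≤ l j := fun j hj =>
        hmin _ (Finset.mem_insert_of_mem (Finset.mem_image_of_mem l hj))
      have hFy' : F y' = F y := hmiss y y' (hpa.trans hay) hyy'.le hy'x fun j hj =>
        (le_or_gt (l j) y).imp (hcov j hj) (hy'l j hj)
      obtain ⟨R, hR, hRδ⟩ := ih y' (Finset.mem_union_left _ hy') hyy' y' 0 (by linarith) le_rfl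
        (hy'x.trans hxq) (fun j hj hy'j => hy'l j hj (lt_of_not_ge fun hjy =>
          (hcov j hj hjy).not_gt (hyy'.trans hy'j))) (by linarith)
      have := mul_le_mul_of_nonneg_left hyy'.le hδ0
      rw [hFy'] at hRδ
      exact ⟨R, hR, by linarith⟩

theorem exists_density_le_of_cover (hδ0 : 0 ≤ δ) (hδ1 : δ ≤ 1) (hF : Monotone F)
    (hlip : ∀ ⦃u v⦄, u ≤ v → F v - F u ≤ v - u)
    (hJ : ∀ j ∈ J, p ≤ l j ∧ r j ≤ q ∧ F (r j) - F (l j) ≤ δ * (r j - l j))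
    (hpx : p ≤ x) (hxq : x ≤ q)
    (hmiss : ∀ u v, p ≤ u → u ≤ v → v ≤ x → (∀ j ∈ J, r j ≤ u ∨ v ≤ l j) → F v = F u) :
    ∃ R ∈ Icc x q, (1 + δ) * (F R - F p) ≤ 2 * δ * (R - p) := by
  simpa using exists_density_le_of_sweep hδ0 hδ1 hF hlip (fun j hj => (hJ j hj).2) hxq hmiss p p 0
    le_rfl le_rfl (hpx.trans hxq) (fun j hj _ => (hJ j hj).1) (by simp)

end Covering

section Colorings

/-- The cumulative function of a measure on the line, carried along `x ↦ -x`. -/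
def reflect (F : ℝ → ℝ) : ℝ → ℝ := fun x => -F (-x)

theorem reflect_apply (F : ℝ → ℝ) (x : ℝ) : reflect F x = -F (-x) := rfl

@[simp]
theorem reflect_neg (F : ℝ → ℝ) (x : ℝ) : reflect F (-x) = -F x := by
  simp [reflect]

@[simp]
theorem reflect_reflect (F : ℝ → ℝ) : reflect (reflect F) = F := by
  ext x
  simp [reflect]

theorem monotone_reflect {F : ℝ → ℝ} (hF : Monotone F) : Monotone (reflect F) :=
  fun _ _ hxy => neg_le_neg (hF (neg_le_neg hxy))

/-- A coloring of the window `[p, q]` in black and white, changing color only at the points of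
`E`. It is recorded by the cumulative lengths `F` of black and `G` of white, only the increments
of which matter. -/
structure TwoColoring (E : Finset ℝ) (F G : ℝ → ℝ) (p q : ℝ) : Prop where
  monotone_black : Monotone F
  monotone_white : Monotone G
  add_eq : ∀ x, F x + G x = x
  isLeast : IsLeast (E : Set ℝ) p
  isGreatest : IsGreatest (E : Set ℝ) q
  eq_or_eq : ∀ x y, p ≤ x → x ≤ y → y ≤ q → (∀ e ∈ E, e ∉ Ioo x y) → F y = F x ∨ G y = G x

/-- An interval free of `E` that carries nothing of the color with cumulative length `G`, hence
is entirely of the other color. -/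
structure IsGap (E : Finset ℝ) (G : ℝ → ℝ) (r r' : ℝ) : Prop where
  lt : r < r'
  notMem : ∀ e ∈ E, e ∉ Ioo r r'
  eq : G r' = G r

variable {E : Finset ℝ} {F G : ℝ → ℝ} {p q : ℝ}

open scoped Pointwise in
theorem IsGap.reflect {r r' : ℝ} (h : IsGap (-E) (reflect F) r r') : IsGap E F (-r') (-r) where
  lt := neg_lt_neg h.lt
  notMem e he hmem := h.notMem (-e) (by simpa using he) ⟨lt_neg.1 hmem.2, neg_lt.1 hmem.1⟩
  eq := (neg_injective h.eq).symm

namespace TwoColoring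

theorem swap (h : TwoColoring E F G p q) : TwoColoring E G F p q where
  monotone_black := h.monotone_white
  monotone_white := h.monotone_black
  add_eq x := by rw [add_comm, h.add_eq]
  isLeast := h.isLeast
  isGreatest := h.isGreatest
  eq_or_eq x y hpx hxy hyq hE := (h.eq_or_eq x y hpx hxy hyq hE).symm

open scoped Pointwise in
theorem reflect (h : TwoColoring E F G p q) :
    TwoColoring (-E) (reflect G) (reflect F) (-q) (-p) where
  monotone_black := monotone_reflect h.monotone_white
  monotone_white := monotone_reflect h.monotone_black
  add_eq x := by
    rw [reflect_apply, reflect_apply]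
    linarith [h.add_eq (-x)]
  isLeast := ⟨by simpa using h.isGreatest.1,
    fun e he => neg_le.1 (h.isGreatest.2 (by simpa using he))⟩
  isGreatest := ⟨by simpa using h.isLeast.1,
    fun e he => le_neg.1 (h.isLeast.2 (by simpa using he))⟩
  eq_or_eq x y hqx hxy hyp hE := by
    have hgap := h.eq_or_eq (-y) (-x) (le_neg.1 hyp) (neg_le_neg hxy) (neg_le.1 hqx)
      fun e he hmem => hE (-e) (by simpa using he) ⟨lt_neg.1 hmem.2, neg_lt.1 hmem.1⟩
    exact hgap.symm.imp (fun h => congrArg Neg.neg h.symm) fun h => congrArg Neg.neg h.symm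

theorem le (h : TwoColoring E F G p q) : p ≤ q := h.isLeast.2 h.isGreatest.1

theorem black_sub_le (h : TwoColoring E F G p q) ⦃x y : ℝ⦄ (hxy : x ≤ y) :
    F y - F x ≤ y - x := by
  linarith [h.monotone_white hxy, h.add_eq x, h.add_eq y]

theorem filter_Icc (h : TwoColoring E F G p q) {a b u v : ℝ}
    (hu : IsLeast (E.filter (· ∈ Icc a b) : Set ℝ) u)
    (hv : IsGreatest (E.filter (· ∈ Icc a b) : Set ℝ) v) :
    TwoColoring (E.filter (· ∈ Icc a b)) F G u v where
  monotone_black := h.monotone_black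
  monotone_white := h.monotone_white
  add_eq := h.add_eq
  isLeast := hu
  isGreatest := hv
  eq_or_eq x y hux hxy hyv hE := by
    obtain ⟨huE, hau, -⟩ := Finset.mem_filter.1 hu.1
    obtain ⟨hvE, -, hvb⟩ := Finset.mem_filter.1 hv.1
    refine h.eq_or_eq x y ((h.isLeast.2 huE).trans hux) hxy (hyv.trans (h.isGreatest.2 hvE))
      fun e he hmem => hE e (Finset.mem_filter.2 ⟨he, ?_, ?_⟩) hmem
    · linarith [hmem.1]
    · linarith [hmem.2]

theorem white_eq_of_isGap (h : TwoColoring E F G p q) {r r' x y : ℝ} (hr : IsGap E G r r')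
    (hpx : p ≤ x) (hxr : x ≤ r) (hry : r' ≤ y) (hyq : y ≤ q) (hE : ∀ e ∈ E, e ∉ Ioo x y) :
    G y = G x := by
  refine (h.eq_or_eq x y hpx (by linarith [hr.lt]) hyq hE).resolve_left fun hF => ?_
  linarith [h.monotone_black hxr, h.monotone_black hr.lt.le, h.monotone_black hry,
    h.add_eq r, h.add_eq r', hr.lt, hr.eq]

theorem gaps_disjoint (h : TwoColoring E F G p q) {r r' s s' : ℝ} (hr : IsGap E G r r')
    (hs : IsGap E F s s') : r' ≤ s ∨ s' ≤ r := by
  by_contra! hlt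
  have hmax : max r s < min r' s' :=
    max_lt (lt_min hr.lt hlt.2) (lt_min hlt.1 hs.lt)
  linarith [h.monotone_white (le_max_left r s), h.monotone_white (min_le_left r' s'),
    h.monotone_black (le_max_right r s), h.monotone_black (min_le_right r' s'),
    h.add_eq (max r s), h.add_eq (min r' s'), hr.eq, hs.eq]

/- On an interval free of `E`, the function `F - k * id` has slope `-k` or `1 - k`. -/
theorem exists_forall_black_sub_le (h : TwoColoring E F G p q) {k : ℝ} (hk0 : 0 ≤ k)
    (hk1 : k ≤ 1) : ∃ u ∈ E, ∀ y ∈ Icc p q, F y - k * y ≤ F u - k * u := by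
  obtain ⟨u, hu, hmax⟩ := E.exists_max_image (fun e => F e - k * e) ⟨p, h.isLeast.1⟩
  refine ⟨u, hu, fun y hy => ?_⟩
  obtain ⟨a, ha, hamax⟩ := (E.filter (· ≤ y)).exists_max_image id
    ⟨p, Finset.mem_filter.2 ⟨h.isLeast.1, hy.1⟩⟩
  obtain ⟨b, hb, hbmin⟩ := (E.filter (y ≤ ·)).exists_min_image id
    ⟨q, Finset.mem_filter.2 ⟨h.isGreatest.1, hy.2⟩⟩
  obtain ⟨haE, hay⟩ := Finset.mem_filter.1 ha
  obtain ⟨hbE, hyb⟩ := Finset.mem_filter.1 hb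
  have hE : ∀ e ∈ E, e ∉ Ioo a b := fun e he hmem => (le_total e y).elim
    (fun hey => (hamax e (Finset.mem_filter.2 ⟨he, hey⟩)).not_gt hmem.1)
    fun hye => (hbmin e (Finset.mem_filter.2 ⟨he, hye⟩)).not_gt hmem.2
  rcases h.eq_or_eq a b (h.isLeast.2 haE) (hay.trans hyb) (h.isGreatest.2 hbE) hE with hF | hG
  · have hFy : F y ≤ F a := hF ▸ h.monotone_black hyb
    linarith [hmax a haE, mul_le_mul_of_nonneg_left hay hk0]
  · have hGy : G b ≤ G y := hG ▸ h.monotone_white hay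
    linarith [hmax b hbE, mul_le_mul_of_nonneg_left hyb (sub_nonneg.2 hk1), h.add_eq b, h.add_eq y]

end TwoColoring

end Colorings

section SparseIntervals

/-- The interval of radius `ρ` about `c` is less than `δ` black, when everything left of `p` counts
as black and everything right of `q` as white. Intervals reaching beyond `p` are excluded, since
shrinking them to the window only lowers the black density. -/
def BlackSparse (δ : ℝ) (F : ℝ → ℝ) (p q c ρ : ℝ) : Prop :=
  0 < ρ ∧ p ≤ c - ρ ∧ F (min (c + ρ) q) - F (c - ρ) < 2 * δ * ρ

/-- The mirror image of `BlackSparse`, for white. -/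
def WhiteSparse (δ : ℝ) (G : ℝ → ℝ) (p q c ρ : ℝ) : Prop :=
  0 < ρ ∧ c + ρ ≤ q ∧ G (c + ρ) - G (max (c - ρ) p) < 2 * δ * ρ

/-- The interval of radius `ρ` about `c` has density less than `δ` in the color with cumulative
length `F` and does not meet `(r, r')`. -/
def SparseAvoiding (δ : ℝ) (F : ℝ → ℝ) (r r' c ρ : ℝ) : Prop :=
  0 < ρ ∧ F (c + ρ) - F (c - ρ) < 2 * δ * ρ ∧ (c + ρ ≤ r ∨ r' ≤ c - ρ)

variable {δ p q c u v ρ : ℝ} {F G : ℝ → ℝ}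

theorem blackSparse_reflect :
    BlackSparse δ (reflect G) (-q) (-p) c ρ ↔ WhiteSparse δ G p q (-c) ρ := by
  have hmin : -min (c + ρ) (-p) = max (-c - ρ) p := by
    rw [← max_neg_neg, neg_neg, neg_add']
  have hadd : -(c - ρ) = -c + ρ := by ring
  have hle : -q ≤ c - ρ ↔ -c + ρ ≤ q := by rw [neg_le, hadd]
  simp only [BlackSparse, WhiteSparse, reflect_apply, hmin, hadd, neg_sub_neg, hle]

theorem whiteSparse_reflect :
    WhiteSparse δ (reflect F) (-q) (-p) c ρ ↔ BlackSparse δ F p q (-c) ρ := by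
  simpa using (blackSparse_reflect (δ := δ) (G := reflect F) (p := -q) (q := -p) (c := -c)
    (ρ := ρ)).symm

theorem WhiteSparse.of_le_left (h : WhiteSparse δ G p q c ρ) (hG : Monotone G) (hu : p ≤ u) :
    WhiteSparse δ G u q c ρ :=
  ⟨h.1, h.2.1, by linarith [hG (max_le_max_left (c - ρ) hu), h.2.2]⟩

theorem BlackSparse.sub_lt (h : BlackSparse δ F p q c ρ) (hq : c + ρ ≤ q) :
    F (c + ρ) - F (c - ρ) < 2 * δ * ρ := by
  simpa only [min_eq_left hq] using h.2.2

theorem WhiteSparse.sub_lt (h : WhiteSparse δ G p q c ρ) (hp : p ≤ c - ρ) :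
    G (c + ρ) - G (c - ρ) < 2 * δ * ρ := by
  simpa only [max_eq_left hp] using h.2.2

theorem blackSparse_of_sub_lt (hF : Monotone F) (hρ : 0 < ρ) (hp : p ≤ c - ρ)
    (h : F (c + ρ) - F (c - ρ) < 2 * δ * ρ) : BlackSparse δ F p q c ρ :=
  ⟨hρ, hp, by linarith [hF (min_le_left (c + ρ) q)]⟩

theorem whiteSparse_of_sub_lt (hG : Monotone G) (hρ : 0 < ρ) (hq : c + ρ ≤ q)
    (h : G (c + ρ) - G (c - ρ) < 2 * δ * ρ) : WhiteSparse δ G p q c ρ :=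
  ⟨hρ, hq, by linarith [hG (le_max_left (c - ρ) p)]⟩

/- An interval reaching beyond `u` is shrunk until it ends at `u`, cutting off a part that is at
least `2 * δ` black on the left. -/
theorem BlackSparse.restrict_left (h : BlackSparse δ F p q c ρ) (hF : Monotone F) (huc : u ≤ c)
    (hcq : c ≤ q) (hu : ∀ y, p ≤ y → y ≤ u → 2 * δ * (u - y) ≤ F u - F y) :
    ∃ ρ', BlackSparse δ F u q c ρ' := by
  obtain ⟨hρ, hp, hlt⟩ := h
  rcases le_or_gt u (c - ρ) with hle | hgt
  · exact ⟨ρ, hρ, hle, hlt⟩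
  have hlt' : F (min (c + (c - u)) q) - F u < 2 * δ * (c - u) := by
    linarith [hu (c - ρ) hp hgt.le,
      hF (min_le_min_right q (show c + (c - u) ≤ c + ρ by linarith))]
  have hne : u ≠ c := by
    rintro rfl
    simp [hcq] at hlt'
  exact ⟨c - u, sub_pos.2 (huc.lt_of_ne hne), by linarith, by rwa [sub_sub_cancel]⟩

theorem WhiteSparse.restrict_right (h : WhiteSparse δ G p q c ρ) (hG : Monotone G) (hcv : c ≤ v)
    (hpc : p ≤ c) (hv : ∀ y, v ≤ y → y ≤ q → 2 * δ * (y - v) ≤ G y - G v) :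
    ∃ ρ', WhiteSparse δ G p v c ρ' := by
  have hrefl : BlackSparse δ (reflect G) (-q) (-p) (-c) ρ :=
    blackSparse_reflect.2 (by rwa [neg_neg])
  obtain ⟨ρ', hρ'⟩ := hrefl.restrict_left (u := -v) (monotone_reflect hG) (neg_le_neg hcv)
    (neg_le_neg hpc) fun y hqy hyv => by
      rw [reflect_neg, reflect_apply]
      linarith [hv (-y) (le_neg.1 hyv) (neg_le.1 hqy)]
  exact ⟨ρ', by simpa using blackSparse_reflect.1 hρ'⟩

end SparseIntervals

section BadSystems

/-- A colored window in which no point of `E` is a good endpoint for `δ`. -/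
structure BadSystem (δ : ℝ) (E : Finset ℝ) (F G : ℝ → ℝ) (p q : ℝ) : Prop
    extends TwoColoring E F G p q where
  exists_sparse : ∀ c ∈ E, ∃ ρ, BlackSparse δ F p q c ρ ∨ WhiteSparse δ G p q c ρ

/-- A bad system with the fewest points among all bad systems for the same `δ`. -/
structure MinimalBadSystem (δ : ℝ) (E : Finset ℝ) (F G : ℝ → ℝ) (p q : ℝ) : Prop
    extends BadSystem δ E F G p q where
  card_le : ∀ ⦃E' F' G' p' q'⦄, BadSystem δ E' F' G' p' q' → E.card ≤ E'.card

variable {E : Finset ℝ} {F G : ℝ → ℝ} {δ p q : ℝ}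

open scoped Pointwise in
theorem BadSystem.reflect (h : BadSystem δ E F G p q) :
    BadSystem δ (-E) (reflect G) (reflect F) (-q) (-p) where
  toTwoColoring := h.toTwoColoring.reflect
  exists_sparse c hc := by
    simp only [blackSparse_reflect, whiteSparse_reflect]
    exact (h.exists_sparse (-c) (by simpa using hc)).imp fun _ => Or.symm

open scoped Pointwise in
theorem MinimalBadSystem.reflect (h : MinimalBadSystem δ E F G p q) :
    MinimalBadSystem δ (-E) (reflect G) (reflect F) (-q) (-p) where
  toBadSystem := h.toBadSystem.reflect
  card_le _ _ _ _ _ h' := (Finset.card_neg E).trans_le (h.card_le h')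

theorem TwoColoring.exists_hull_between_gaps (h : TwoColoring E F G p q) {r r' s s' : ℝ}
    (hr : IsGap E G r r') (hs : IsGap E F s s') (hpr : p ≤ r) (hrs : r' ≤ s) (hsq : s' ≤ q) :
    ∃ u v, IsLeast (E.filter (· ∈ Icc r' s) : Set ℝ) u ∧
      IsGreatest (E.filter (· ∈ Icc r' s) : Set ℝ) v ∧ G u = G r ∧ F s' = F v := by
  have hE : ∀ {x y}, r ≤ x → y ≤ s' → (∀ e ∈ E, e ∈ Icc r' s → e ∉ Ioo x y) →
      ∀ e ∈ E, e ∉ Ioo x y := fun {x y} hx hy hM e he hmem => by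
    rcases lt_or_ge e r' with her | her
    · exact hr.notMem e he ⟨hx.trans_lt hmem.1, her⟩
    rcases lt_or_ge s e with hes | hes
    · exact hs.notMem e he ⟨hes, hmem.2.trans_le hy⟩
    · exact hM e he ⟨her, hes⟩ hmem
  have hne : (E.filter (· ∈ Icc r' s)).Nonempty := by
    by_contra hempty
    rw [Finset.not_nonempty_iff_eq_empty, Finset.filter_eq_empty_iff] at hempty
    have hfree := hE le_rfl le_rfl fun e he hmem => absurd hmem (hempty he)
    linarith [h.white_eq_of_isGap hr hpr le_rfl (hrs.trans hs.lt.le) hsq hfree,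
      h.swap.white_eq_of_isGap hs hpr (hr.lt.le.trans hrs) le_rfl hsq hfree,
      h.add_eq r, h.add_eq s', hr.lt, hs.lt]
  have hu := (E.filter (· ∈ Icc r' s)).isLeast_min' hne
  have hv := (E.filter (· ∈ Icc r' s)).isGreatest_max' hne
  obtain ⟨huE, hru, hus⟩ := Finset.mem_filter.1 hu.1
  obtain ⟨hvE, hrv, hvs⟩ := Finset.mem_filter.1 hv.1
  refine ⟨_, _, hu, hv,
    h.white_eq_of_isGap hr hpr le_rfl hru (h.isGreatest.2 huE) <|
      hE le_rfl (hus.trans hs.lt.le) fun e he hmem hru =>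
        (hu.2 (Finset.mem_filter.2 ⟨he, hmem⟩)).not_gt hru.2,
    h.swap.white_eq_of_isGap hs (h.isLeast.2 hvE) hvs le_rfl hsq <|
      hE (hr.lt.le.trans hrv) le_rfl fun e he hmem hvs =>
        (hv.2 (Finset.mem_filter.2 ⟨he, hmem⟩)).not_gt hvs.1⟩

theorem TwoColoring.exists_badSystem_between_gaps (h : TwoColoring E F G p q) (hδ : 2 * δ ≤ 1)
    {r r' s s' : ℝ} (hr : IsGap E G r r') (hs : IsGap E F s s') (hpr : p ≤ r) (hrs : r' ≤ s)
    (hsq : s' ≤ q) (hbad : ∀ c ∈ E, c ∈ Icc r' s →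
      ∃ ρ, SparseAvoiding δ F r r' c ρ ∨ SparseAvoiding δ G s s' c ρ) :
    ∃ u v, BadSystem δ (E.filter (· ∈ Icc r' s)) F G u v := by
  obtain ⟨u, v, hu, hv, hGu, hFv⟩ := h.exists_hull_between_gaps hr hs hpr hrs hsq
  refine ⟨u, v, h.filter_Icc hu hv, fun c hc => ?_⟩
  obtain ⟨hcE, hc'⟩ := Finset.mem_filter.1 hc
  -- `[r', u]` is entirely black and `[v, s]` entirely white, hence both are at least `2 * δ` so.
  obtain ⟨ρ, ⟨hρ, hlt, hle⟩ | ⟨hρ, hlt, hle⟩⟩ := hbad c hcE hc'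
  · have hr'c : r' ≤ c - ρ := hle.resolve_left fun _ => by linarith [hr.lt, hc'.1]
    refine ((blackSparse_of_sub_lt h.monotone_black hρ hr'c hlt).restrict_left
      h.monotone_black (hu.2 hc) (hv.2 hc) fun y hry hyu => ?_).imp fun _ => Or.inl
    linarith [mul_le_of_le_one_left (sub_nonneg.2 hyu) hδ, h.add_eq u, h.add_eq y,
      h.monotone_white (hr.lt.le.trans hry)]
  · have hcs : c + ρ ≤ s := hle.resolve_right fun _ => by linarith [hs.lt, hc'.2]
    refine ((whiteSparse_of_sub_lt h.monotone_white hρ hcs hlt).restrict_right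
      h.monotone_white (hv.2 hc) (hu.2 hc) fun y hvy hys => ?_).imp fun _ => Or.inr
    linarith [mul_le_of_le_one_left (sub_nonneg.2 hvy) hδ, h.add_eq v, h.add_eq y,
      h.monotone_black (hys.trans hs.lt.le)]

namespace MinimalBadSystem

theorem not_badSystem_filter (h : MinimalBadSystem δ E F G p q) {P : ℝ → Prop} [DecidablePred P]
    {e : ℝ} (he : e ∈ E) (hP : ¬P e) {F' G' : ℝ → ℝ} {u v : ℝ} :
    ¬BadSystem δ (E.filter P) F' G' u v := fun h' =>
  (h.card_le h').not_gt (Finset.card_lt_card (Finset.filter_ssubset.2 ⟨e, he, hP⟩))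

theorem black_sub_le_mul (h : MinimalBadSystem δ E F G p q) (hδ0 : 0 ≤ δ) (hδ : 2 * δ ≤ 1)
    {x : ℝ} (hx : x ∈ Icc p q) : F x - F p ≤ 2 * δ * (x - p) := by
  obtain ⟨u, huE, hmax⟩ := h.exists_forall_black_sub_le (mul_nonneg zero_le_two hδ0) hδ
  have huq := h.isGreatest.2 huE
  suffices hup : u = p by
    subst hup
    linarith [hmax x hx]
  by_contra hup
  have hpu : p < u := (h.isLeast.2 huE).lt_of_ne' hup
  -- Cutting the window at `u` leaves a smaller bad system.
  have hcut : BadSystem δ (E.filter (· ∈ Icc u q)) F G u q := by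
    refine ⟨h.filter_Icc ⟨Finset.mem_filter.2 ⟨huE, le_rfl, huq⟩,
      fun e he => (Finset.mem_filter.1 he).2.1⟩ ⟨Finset.mem_filter.2 ⟨h.isGreatest.1, huq, le_rfl⟩,
      fun e he => (Finset.mem_filter.1 he).2.2⟩, fun c hc => ?_⟩
    obtain ⟨hcE, huc, hcq⟩ := Finset.mem_filter.1 hc
    obtain ⟨ρ, hρ | hρ⟩ := h.exists_sparse c hcE
    · exact (hρ.restrict_left h.monotone_black huc hcq fun y hpy hyu => by
        linarith [hmax y ⟨hpy, hyu.trans huq⟩]).imp fun _ => Or.inl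
    · exact ⟨ρ, .inr (hρ.of_le_left h.monotone_white hpu.le)⟩
  exact h.not_badSystem_filter h.isLeast.1 (fun hp => hpu.not_ge hp.1) hcut

/- The point `x` is the first black-sparse center whose interval reaches `q`. -/
theorem exists_black_sub_lt (h : MinimalBadSystem δ E F G p q) (hδ0 : 0 ≤ δ) (hδ : 2 * δ ≤ 1)
    {ρ : ℝ → ℝ} (hρ : ∀ c ∈ E, BlackSparse δ F p q c (ρ c) ∨ WhiteSparse δ G p q c (ρ c)) :
    ∃ x ∈ E, F q - F p < 2 * δ * (x - p) ∧
      ∀ c ∈ E, c < x → BlackSparse δ F p q c (ρ c) → c + ρ c ≤ q := by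
  classical
  have hq : BlackSparse δ F p q q (ρ q) := (hρ q h.isGreatest.1).resolve_right fun hw => by
    linarith [hw.1, hw.2.1]
  obtain ⟨x, hx, hmin⟩ :=
    (E.filter fun c => BlackSparse δ F p q c (ρ c) ∧ q ≤ c + ρ c).exists_min_image id
      ⟨q, Finset.mem_filter.2 ⟨h.isGreatest.1, hq, by linarith [hq.1]⟩⟩
  obtain ⟨hxE, ⟨hpos, hp, hlt⟩, hxq⟩ := Finset.mem_filter.1 hx
  refine ⟨x, hxE, ?_, fun c hc hcx hsparse => le_of_not_gt fun hcq => hcx.not_ge <|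
    hmin c (Finset.mem_filter.2 ⟨hc, hsparse, hcq.le⟩)⟩
  rw [min_eq_right hxq] at hlt
  linarith [h.black_sub_le_mul hδ0 hδ ⟨hp, by linarith [h.isGreatest.2 hxE]⟩]

open scoped Pointwise in
theorem exists_white_sub_lt (h : MinimalBadSystem δ E F G p q) (hδ0 : 0 ≤ δ) (hδ : 2 * δ ≤ 1)
    {ρ : ℝ → ℝ} (hρ : ∀ c ∈ E, BlackSparse δ F p q c (ρ c) ∨ WhiteSparse δ G p q c (ρ c)) :
    ∃ z ∈ E, G q - G p < 2 * δ * (q - z) ∧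
      ∀ c ∈ E, z < c → WhiteSparse δ G p q c (ρ c) → p ≤ c - ρ c := by
  obtain ⟨x, hxE, hlt, hx⟩ := h.reflect.exists_black_sub_lt hδ0 hδ (ρ := fun c => ρ (-c))
    fun c hc => by
      rw [blackSparse_reflect, whiteSparse_reflect]
      exact (hρ (-c) (by simpa using hc)).symm
  refine ⟨-x, by simpa using hxE, ?_, fun c hc hxc hsparse => ?_⟩
  · rw [reflect_neg, reflect_neg] at hlt
    linarith
  · have hq := hx (-c) (by simpa using hc) (neg_lt.1 hxc)
      (blackSparse_reflect.2 (by simpa using hsparse))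
    rw [neg_neg] at hq
    linarith

end MinimalBadSystem

end BadSystems

section Gaps

variable {ι : Type*} {E : Finset ℝ} {F G : ℝ → ℝ} {δ p q x z : ℝ} {J : Finset ι} {l r : ι → ℝ}

theorem TwoColoring.black_eq_of_no_gap (h : TwoColoring E F G p q) {u v : ℝ} (hpu : p ≤ u)
    (huv : u ≤ v) (hvq : v ≤ q) (hgap : ∀ s s', u ≤ s → s' ≤ v → ¬IsGap E G s s') :
    F v = F u :=
  eq_of_forall_eq_of_notMem_Ioo E huv fun s s' hus hlt hsv hE =>
    (h.eq_or_eq s s' (hpu.trans hus) hlt.le (hsv.trans hvq) hE).resolve_right fun hG =>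
      hgap s s' hus hsv ⟨hlt, hE, hG⟩

theorem TwoColoring.exists_density_le_of_no_black_gap (h : TwoColoring E F G p q) (hδ0 : 0 ≤ δ)
    (hδ1 : δ ≤ 1) (hpz : p ≤ z) (hzx : z ≤ x) (hxq : x ≤ q)
    (hJ : ∀ j ∈ J, p ≤ l j ∧ l j ≤ r j ∧ r j ≤ q ∧ F (r j) - F (l j) ≤ δ * (r j - l j))
    (hgap : ∀ s s', IsGap E G s s' → z ≤ s → s' ≤ x → ∃ j ∈ J, s < r j ∧ l j < s') :
    ∃ R ∈ Icc x q, (1 + δ) * (F R - F z) ≤ 2 * δ * (R - p) := by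
  -- Recoloring everything left of `z` white only makes the intervals sparser.
  have hclip : ∀ ⦃u v⦄, u ≤ v → F (max v z) - F (max u z) ≤ F v - F u := fun u v huv => by
    rcases le_total u z with huz | hzu
    · rw [max_eq_right huz]
      rcases le_total v z with hvz | hzv
      · simpa [max_eq_right hvz] using h.monotone_black huv
      · rw [max_eq_left hzv]
        exact sub_le_sub_left (h.monotone_black huz) _
    · rw [max_eq_left hzu, max_eq_left (hzu.trans huv)]
  obtain ⟨R, hR, hRδ⟩ := exists_density_le_of_cover (F := fun y => F (max y z)) hδ0 hδ1
    (fun u v huv => h.monotone_black (max_le_max_right z huv))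
    (fun u v huv => (hclip huv).trans (h.black_sub_le huv))
    (fun j hj => ⟨(hJ j hj).1, (hJ j hj).2.2.1, (hclip (hJ j hj).2.1).trans (hJ j hj).2.2.2⟩)
    (hpz.trans hzx) hxq fun u v _ huv hvx hmiss =>
      h.black_eq_of_no_gap (le_max_of_le_right hpz) (max_le_max_right z huv)
        ((max_le hvx hzx).trans hxq) fun s s' hus hsv hs => by
        have hzs : z ≤ s := (le_max_right u z).trans hus
        have hs'v : s' ≤ v := (le_max_iff.1 hsv).resolve_right (hzs.trans_lt hs.lt).not_ge
        obtain ⟨j, hj, hsr, hls'⟩ := hgap s s' hs hzs (hs'v.trans hvx)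
        rcases hmiss j hj with hju | hvj
        · linarith [le_max_left u z]
        · linarith
  exact ⟨R, hR, by simpa [hpz, hzx.trans hR.1] using hRδ⟩

theorem two_mul_le_one_of_cubic_lt_one (hδ : 0 ≤ δ)
    (hcubic : 4 * δ ^ 3 + 2 * δ ^ 2 + 3 * δ < 1) : 2 * δ ≤ 1 := by
  linarith [pow_nonneg hδ 3, sq_nonneg δ]

theorem TwoColoring.exists_black_gap (h : TwoColoring E F G p q) (hδ : 0 ≤ δ)
    (hcubic : 4 * δ ^ 3 + 2 * δ ^ 2 + 3 * δ < 1) (hpz : p ≤ z) (hxq : x ≤ q)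
    (hF : F q - F p < 2 * δ * (x - p)) (hG : G q - G p < 2 * δ * (q - z))
    (hJ : ∀ j ∈ J, p ≤ l j ∧ l j ≤ r j ∧ r j ≤ q ∧ F (r j) - F (l j) ≤ δ * (r j - l j)) :
    ∃ s s', IsGap E G s s' ∧ z ≤ s ∧ s' ≤ x ∧ ∀ j ∈ J, r j ≤ s ∨ s' ≤ l j := by
  by_contra! hgap
  have h2δ := two_mul_le_one_of_cubic_lt_one hδ hcubic
  have hlength : (1 - 2 * δ) * (q - p) < 2 * δ * (x - z) := by
    linarith [h.add_eq p, h.add_eq q]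
  have hzx : z < x := by
    have : 0 < 2 * δ * (x - z) :=
      (mul_nonneg (by linarith) (sub_nonneg.2 h.le)).trans_lt hlength
    exact sub_pos.1 (pos_of_mul_pos_right this (by linarith))
  obtain ⟨R, hR, hRδ⟩ :=
    h.exists_density_le_of_no_black_gap hδ (by linarith) hpz hzx.le hxq hJ hgap
  -- Compare black and white on `[z, R]`: black is at most `2 * δ * (R - p) / (1 + δ)`, white at
  -- most `G q - G p`.
  have hwhite : (R - z) - (F R - F z) ≤ 2 * δ * (q - z) := by
    linarith [h.add_eq R, h.add_eq z, h.monotone_white hpz, h.monotone_white hR.2]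
  have hRz : (1 - δ) * (R - z) ≤ 2 * δ * (1 + δ) * (q - z) + 2 * δ * (z - p) := by
    linarith [mul_le_mul_of_nonneg_left hwhite (by linarith : 0 ≤ 1 + δ)]
  have hlarge : (1 - δ) * ((1 - 2 * δ) * (q - p)) < 4 * δ ^ 2 * (1 + δ) * (q - p) :=
    calc (1 - δ) * ((1 - 2 * δ) * (q - p)) < (1 - δ) * (2 * δ * (x - z)) :=
          mul_lt_mul_of_pos_left hlength (by linarith)
      _ ≤ 2 * δ * ((1 - δ) * (R - z)) := by
          have := mul_le_mul_of_nonneg_left hR.1 (mul_nonneg hδ (by linarith : 0 ≤ 1 - δ))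
          linarith
      _ ≤ 2 * δ * (2 * δ * (1 + δ) * (q - z) + 2 * δ * (z - p)) :=
          mul_le_mul_of_nonneg_left hRz (by linarith)
      _ ≤ 4 * δ ^ 2 * (1 + δ) * (q - p) := by
          linarith [mul_nonneg (pow_nonneg hδ 3) (sub_nonneg.2 hpz)]
  -- The cubic is `1 - ((1 - δ) * (1 - 2 * δ) - 4 * δ ^ 2 * (1 + δ))`.
  have hsmall : 0 ≤ (1 - (4 * δ ^ 3 + 2 * δ ^ 2 + 3 * δ)) * (q - p) :=
    mul_nonneg (by linarith) (sub_nonneg.2 h.le)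
  linarith

theorem TwoColoring.exists_white_gap (h : TwoColoring E F G p q) (hδ : 0 ≤ δ)
    (hcubic : 4 * δ ^ 3 + 2 * δ ^ 2 + 3 * δ < 1) (hpz : p ≤ z) (hxq : x ≤ q)
    (hF : F q - F p < 2 * δ * (x - p)) (hG : G q - G p < 2 * δ * (q - z))
    (hJ : ∀ j ∈ J, p ≤ l j ∧ l j ≤ r j ∧ r j ≤ q ∧ G (r j) - G (l j) ≤ δ * (r j - l j)) :
    ∃ s s', IsGap E F s s' ∧ z ≤ s ∧ s' ≤ x ∧ ∀ j ∈ J, r j ≤ s ∨ s' ≤ l j := by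
  obtain ⟨s, s', hs, hxs, hsz, hmiss⟩ := h.reflect.exists_black_gap (J := J) (l := fun j => -r j)
    (r := fun j => -l j) hδ hcubic (neg_le_neg hxq) (neg_le_neg hpz)
    (by rw [reflect_neg, reflect_neg]; linarith) (by rw [reflect_neg, reflect_neg]; linarith)
    fun j hj => by
      obtain ⟨hpl, hlr, hrq, hjδ⟩ := hJ j hj
      rw [reflect_neg, reflect_neg]
      exact ⟨neg_le_neg hrq, neg_le_neg hlr, neg_le_neg hpl, by linarith⟩
  exact ⟨-s', -s, hs.reflect, le_neg.1 hsz, neg_le.1 hxs, fun j hj =>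
    (hmiss j hj).symm.imp le_neg.1 neg_le.1⟩

end Gaps

section Descent

variable {E : Finset ℝ} {F G : ℝ → ℝ} {δ p q : ℝ}

theorem MinimalBadSystem.exists_gaps (h : MinimalBadSystem δ E F G p q) (hδ : 0 ≤ δ)
    (hcubic : 4 * δ ^ 3 + 2 * δ ^ 2 + 3 * δ < 1) :
    ∃ r r' s s', IsGap E G r r' ∧ IsGap E F s s' ∧ p ≤ r ∧ r' ≤ q ∧ p ≤ s ∧ s' ≤ q ∧
      ∀ c ∈ E, c ∈ Icc (min r' s') (max r s) →
        ∃ ρ, SparseAvoiding δ F r r' c ρ ∨ SparseAvoiding δ G s s' c ρ := by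
  classical
  have h2δ := two_mul_le_one_of_cubic_lt_one hδ hcubic
  choose! ρ hρ using h.exists_sparse
  obtain ⟨x, hxE, hF, hx⟩ := h.exists_black_sub_lt hδ h2δ hρ
  obtain ⟨z, hzE, hG, hz⟩ := h.exists_white_sub_lt hδ h2δ hρ
  have hpz := h.isLeast.2 hzE
  have hxq := h.isGreatest.2 hxE
  obtain ⟨r, r', hr, hzr, hrx, hrJ⟩ := h.exists_black_gap
    (J := E.filter fun c => c < x ∧ BlackSparse δ F p q c (ρ c)) (l := fun c => c - ρ c)
    (r := fun c => c + ρ c) hδ hcubic hpz hxq hF hG fun c hc => by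
      obtain ⟨hcE, hcx, hsparse⟩ := Finset.mem_filter.1 hc
      have hcq := hx c hcE hcx hsparse
      exact ⟨hsparse.2.1, by linarith [hsparse.1], hcq, by linarith [hsparse.sub_lt hcq]⟩
  obtain ⟨s, s', hs, hzs, hsx, hsJ⟩ := h.exists_white_gap
    (J := E.filter fun c => z < c ∧ WhiteSparse δ G p q c (ρ c)) (l := fun c => c - ρ c)
    (r := fun c => c + ρ c) hδ hcubic hpz hxq hF hG fun c hc => by
      obtain ⟨hcE, hzc, hsparse⟩ := Finset.mem_filter.1 hc
      have hpc := hz c hcE hzc hsparse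
      exact ⟨hpc, by linarith [hsparse.1], hsparse.2.1, by linarith [hsparse.sub_lt hpc]⟩
  refine ⟨r, r', s, s', hr, hs, hpz.trans hzr, hrx.trans hxq, hpz.trans hzs, hsx.trans hxq,
    fun c hcE hc => ⟨ρ c, ?_⟩⟩
  have hzc : z < c := (lt_min (hzr.trans_lt hr.lt) (hzs.trans_lt hs.lt)).trans_le hc.1
  have hcx : c < x := hc.2.trans_lt (max_lt (hr.lt.trans_le hrx) (hs.lt.trans_le hsx))
  exact (hρ c hcE).imp
    (fun hsparse => ⟨hsparse.1, hsparse.sub_lt (hx c hcE hcx hsparse),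
      hrJ c (Finset.mem_filter.2 ⟨hcE, hcx, hsparse⟩)⟩)
    fun hsparse => ⟨hsparse.1, hsparse.sub_lt (hz c hcE hzc hsparse),
      hsJ c (Finset.mem_filter.2 ⟨hcE, hzc, hsparse⟩)⟩

theorem not_minimalBadSystem (hδ : 0 ≤ δ) (hcubic : 4 * δ ^ 3 + 2 * δ ^ 2 + 3 * δ < 1) :
    ¬MinimalBadSystem δ E F G p q := by
  intro h
  have h2δ := two_mul_le_one_of_cubic_lt_one hδ hcubic
  obtain ⟨r, r', s, s', hr, hs, hpr, hrq, hps, hsq, hbad⟩ := h.exists_gaps hδ hcubic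
  rcases h.gaps_disjoint hr hs with hrs | hsr
  · obtain ⟨u, v, huv⟩ := h.exists_badSystem_between_gaps h2δ hr hs hpr hrs hsq
      fun c hc hcI => hbad c hc ⟨min_le_of_left_le hcI.1, le_max_of_le_right hcI.2⟩
    exact h.not_badSystem_filter h.isLeast.1 (fun hp => by linarith [hr.lt, hp.1]) huv
  · obtain ⟨u, v, huv⟩ := h.swap.exists_badSystem_between_gaps h2δ hs hr hps hsr hrq
      fun c hc hcI => (hbad c hc ⟨min_le_of_right_le hcI.1, le_max_of_le_left hcI.2⟩).imp
        fun _ => Or.symm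
    exact h.not_badSystem_filter h.isLeast.1 (fun hp => by linarith [hs.lt, hp.1]) huv

theorem not_badSystem (hδ : 0 ≤ δ) (hcubic : 4 * δ ^ 3 + 2 * δ ^ 2 + 3 * δ < 1) :
    ¬BadSystem δ E F G p q := by
  induction hn : E.card using Nat.strong_induction_on generalizing E F G p q with
  | _ n ih =>
    exact fun h => not_minimalBadSystem hδ hcubic ⟨h, fun _ _ _ _ _ h' =>
      le_of_not_gt fun hlt => ih _ (hn ▸ hlt) rfl h'⟩

end Descent

section FiniteFrontier

theorem measurableSet_of_finite_frontier {X : Type*} [TopologicalSpace X] [T1Space X]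
    [MeasurableSpace X] [BorelSpace X] {H : Set X} (hfin : (frontier H).Finite) :
    MeasurableSet H := by
  rw [← inter_union_sdiff H (frontier H), self_sdiff_frontier]
  exact (hfin.subset inter_subset_right).measurableSet.union isOpen_interior.measurableSet

theorem subset_or_subset_compl_of_disjoint_frontier {X : Type*} [TopologicalSpace X] {S H : Set X}
    (hS : IsPreconnected S) (hH : Disjoint S (frontier H)) : S ⊆ H ∨ S ⊆ Hᶜ := by
  have hcover : S ⊆ interior H ∪ interior Hᶜ := by
    rw [← compl_frontier_eq_union_interior]
    exact hH.subset_compl_right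
  exact (hS.subset_or_subset isOpen_interior isOpen_interior
    (disjoint_compl_right.mono interior_subset interior_subset) hcover).imp
      (·.trans interior_subset) (·.trans interior_subset)

variable {H : Set ℝ} {p q : ℝ}

theorem Iio_subset_of_eventually_mem_atBot (hp : p ∈ lowerBounds (frontier H))
    (hbot : ∀ᶠ x in atBot, x ∈ H) : Iio p ⊆ H := by
  refine (subset_or_subset_compl_of_disjoint_frontier isPreconnected_Iio <|
    disjoint_left.2 fun x hx hxH => (hp hxH).not_gt hx).resolve_right fun hsub => ?_
  obtain ⟨x, hxH, hxp⟩ := (hbot.and (eventually_lt_atBot p)).exists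
  exact hsub hxp hxH

theorem Ioi_subset_of_eventually_mem_atTop (hq : q ∈ upperBounds (frontier H))
    (htop : ∀ᶠ x in atTop, x ∈ H) : Ioi q ⊆ H := by
  refine (subset_or_subset_compl_of_disjoint_frontier isPreconnected_Ioi <|
    disjoint_left.2 fun x hx hxH => (hq hxH).not_gt hx).resolve_right fun hsub => ?_
  obtain ⟨x, hxH, hqx⟩ := (htop.and (eventually_gt_atTop q)).exists
  exact hsub hqx hxH

end FiniteFrontier

section Cumulative

/-- The signed length of the part of `H` between `0` and `x`. -/
noncomputable def cumulative (H : Set ℝ) (x : ℝ) : ℝ :=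
  ∫ y in 0..x, H.indicator (fun _ => 1) y

variable {H : Set ℝ} {c u v ω : ℝ}

theorem intervalIntegrable_indicator_one (hH : MeasurableSet H) (u v : ℝ) :
    IntervalIntegrable (H.indicator fun _ => (1 : ℝ)) volume u v :=
  have h : IntervalIntegrable (fun _ => (1 : ℝ)) volume u v := intervalIntegrable_const
  ⟨h.1.indicator hH, h.2.indicator hH⟩

theorem cumulative_sub_cumulative (hH : MeasurableSet H) (huv : u ≤ v) :
    cumulative H v - cumulative H u = (volume (H ∩ Ioo u v)).toReal := by
  rw [cumulative, cumulative, intervalIntegral.integral_interval_sub_left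
    (intervalIntegrable_indicator_one hH _ _) (intervalIntegrable_indicator_one hH _ _),
    intervalIntegral.integral_of_le huv, integral_Ioc_eq_integral_Ioo, setIntegral_indicator hH,
    setIntegral_const, inter_comm]
  simp [Measure.real]

theorem monotone_cumulative (hH : MeasurableSet H) : Monotone (cumulative H) := fun _ _ huv =>
  sub_nonneg.1 <| (cumulative_sub_cumulative hH huv).symm ▸ ENNReal.toReal_nonneg

theorem cumulative_add_cumulative_compl (hH : MeasurableSet H) (x : ℝ) :
    cumulative H x + cumulative Hᶜ x = x := by
  rw [cumulative, cumulative, ← intervalIntegral.integral_add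
    (intervalIntegrable_indicator_one hH _ _) (intervalIntegrable_indicator_one hH.compl _ _)]
  simp [indicator_self_add_compl_apply]

theorem cumulative_eq_of_disjoint (hH : MeasurableSet H) (huv : u ≤ v)
    (hdisj : Disjoint H (Ioo u v)) : cumulative H v = cumulative H u := by
  rw [← sub_eq_zero, cumulative_sub_cumulative hH huv, hdisj.inter_eq]
  simp

theorem relMeasure_eq_cumulative_sub_div (hH : MeasurableSet H) (hω : 0 < ω) :
    relMeasure H c ω = (cumulative H (c + ω) - cumulative H (c - ω)) / (2 * ω) := by
  rw [relMeasure, cumulative_sub_cumulative hH (by linarith)]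

theorem relMeasure_lt_iff_cumulative_sub_lt {δ : ℝ} (hH : MeasurableSet H) (hω : 0 < ω) :
    relMeasure H c ω < δ ↔ cumulative H (c + ω) - cumulative H (c - ω) < 2 * δ * ω := by
  rw [relMeasure_eq_cumulative_sub_div hH hω, div_lt_iff₀ (by positivity)]
  ring_nf

theorem relMeasure_compl (hH : MeasurableSet H) (hω : 0 < ω) :
    relMeasure Hᶜ c ω = 1 - relMeasure H c ω := by
  rw [relMeasure_eq_cumulative_sub_div hH hω, relMeasure_eq_cumulative_sub_div hH.compl hω,
    eq_sub_iff_add_eq, ← add_div, div_eq_one_iff_eq (by positivity)]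
  linarith [cumulative_add_cumulative_compl hH (c + ω), cumulative_add_cumulative_compl hH (c - ω)]

end Cumulative

section GoodEndpoints

variable {H : Set ℝ} {δ p q : ℝ}

theorem twoColoring_cumulative (hfin : (frontier H).Finite) (hp : IsLeast (frontier H) p)
    (hq : IsGreatest (frontier H) q) :
    TwoColoring hfin.toFinset (cumulative H) (cumulative Hᶜ) p q where
  monotone_black := monotone_cumulative (measurableSet_of_finite_frontier hfin)
  monotone_white := monotone_cumulative (measurableSet_of_finite_frontier hfin).compl
  add_eq := cumulative_add_cumulative_compl (measurableSet_of_finite_frontier hfin)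
  isLeast := by rwa [hfin.coe_toFinset]
  isGreatest := by rwa [hfin.coe_toFinset]
  eq_or_eq x y _ hxy _ hE := by
    have hH := measurableSet_of_finite_frontier hfin
    have hdisj : Disjoint (Ioo x y) (frontier H) :=
      disjoint_right.2 fun e he => hE e (hfin.mem_toFinset.2 he)
    rcases subset_or_subset_compl_of_disjoint_frontier isPreconnected_Ioo hdisj with hsub | hsub
    · exact .inr (cumulative_eq_of_disjoint hH.compl hxy (disjoint_compl_left_iff_subset.2 hsub))
    · exact .inl (cumulative_eq_of_disjoint hH hxy (disjoint_left.2 fun e he he' => hsub he' he))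

theorem badSystem_cumulative (hδ : 2 * δ ≤ 1) (hfin : (frontier H).Finite)
    (hp : IsLeast (frontier H) p) (hq : IsGreatest (frontier H) q) (hpH : Iio p ⊆ H)
    (hqH : Ioi q ⊆ Hᶜ)
    (hbad : ∀ c ∈ frontier H, ∃ ω > 0, relMeasure H c ω < δ ∨ relMeasure Hᶜ c ω < δ) :
    BadSystem δ hfin.toFinset (cumulative H) (cumulative Hᶜ) p q where
  toTwoColoring := twoColoring_cumulative hfin hp hq
  exists_sparse c hc := by
    have hH := measurableSet_of_finite_frontier hfin
    have hcH := hfin.mem_toFinset.1 hc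
    have hpc := hp.2 hcH
    have hcq := hq.2 hcH
    obtain ⟨ω, hω, hlt | hlt⟩ := hbad c hcH
    · have hsparse : BlackSparse δ (cumulative H) (c - ω) q c ω :=
        blackSparse_of_sub_lt (monotone_cumulative hH) hω le_rfl
          ((relMeasure_lt_iff_cumulative_sub_lt hH hω).1 hlt)
      refine (hsparse.restrict_left (monotone_cumulative hH) hpc hcq fun y _ hyp => ?_).imp
        fun _ => Or.inl
      linarith [mul_le_of_le_one_left (sub_nonneg.2 hyp) hδ, cumulative_add_cumulative_compl hH p,
        cumulative_add_cumulative_compl hH y, cumulative_eq_of_disjoint hH.compl hyp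
          (disjoint_compl_left_iff_subset.2 (Ioo_subset_Iio_self.trans hpH))]
    · have hsparse : WhiteSparse δ (cumulative Hᶜ) p (c + ω) c ω :=
        whiteSparse_of_sub_lt (monotone_cumulative hH.compl) hω le_rfl
          ((relMeasure_lt_iff_cumulative_sub_lt hH.compl hω).1 hlt)
      refine (hsparse.restrict_right (monotone_cumulative hH.compl) hcq hpc fun y hqy _ => ?_).imp
        fun _ => Or.inr
      linarith [mul_le_of_le_one_left (sub_nonneg.2 hqy) hδ, cumulative_add_cumulative_compl hH q,
        cumulative_add_cumulative_compl hH y, cumulative_eq_of_disjoint hH hqy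
          (disjoint_left.2 fun e he he' => hqH he'.1 he)]

theorem exists_good_endpoint_general (hδ : 0 ≤ δ) (hcubic : 4 * δ ^ 3 + 2 * δ ^ 2 + 3 * δ < 1)
    (hfin : (frontier H).Finite) (hbot : ∀ᶠ x in atBot, x ∈ H) (htop : ∀ᶠ x in atTop, x ∉ H) :
    ∃ c ∈ frontier H, ∀ ω > 0, δ ≤ relMeasure H c ω ∧ relMeasure H c ω ≤ 1 - δ := by
  by_contra! hbad
  have hne : (frontier H).Nonempty := nonempty_frontier_iff.2
    ⟨hbot.exists, fun huniv => htop.exists.elim fun x hx => hx (huniv ▸ mem_univ x)⟩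
  obtain ⟨p, hp⟩ := hfin.isCompact.exists_isLeast hne
  obtain ⟨q, hq⟩ := hfin.isCompact.exists_isGreatest hne
  refine not_badSystem hδ hcubic <| badSystem_cumulative
    (two_mul_le_one_of_cubic_lt_one hδ hcubic) hfin hp hq
    (Iio_subset_of_eventually_mem_atBot hp.2 hbot)
    (Ioi_subset_of_eventually_mem_atTop (by rw [frontier_compl]; exact hq.2) htop) fun c hc => ?_
  obtain ⟨ω, hω, hlt⟩ := hbad c hc
  refine ⟨ω, hω, (lt_or_ge (relMeasure H c ω) δ).imp_right fun hle => ?_⟩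
  rw [relMeasure_compl (measurableSet_of_finite_frontier hfin) hω]
  linarith [hlt hle]

end GoodEndpoints

namespace Config

variable (C : Config)

theorem finite_endpoints : C.endpoints.Finite :=
  ((finite_range C.a).union (finite_range C.b)).insert 0

theorem frontier_carrier_subset_endpoints : frontier C.carrier ⊆ C.endpoints := by
  have hopen : IsOpen C.carrier := isOpen_Iio.union (isOpen_iUnion fun _ => isOpen_Ioo)
  rintro x hx
  obtain ⟨hxcl, hxC⟩ := hopen.frontier_eq ▸ hx
  rw [carrier, closure_union, closure_Iio, closure_iUnion_of_finite] at hxcl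
  simp only [carrier, mem_union, mem_iUnion, not_or, not_exists] at hxC
  rcases hxcl with hx0 | hxI
  · exact .inl (le_antisymm hx0 (not_lt.1 hxC.1))
  · obtain ⟨i, hi⟩ := mem_iUnion.1 hxI
    rw [closure_Ioo (C.hab i).ne] at hi
    rcases eq_endpoints_or_mem_Ioo_of_mem_Icc hi with rfl | rfl | hmem
    · exact .inr (.inl ⟨i, rfl⟩)
    · exact .inr (.inr ⟨i, rfl⟩)
    · exact absurd hmem (hxC.2 i)

theorem eventually_mem_carrier_atBot : ∀ᶠ x in atBot, x ∈ C.carrier :=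
  (eventually_lt_atBot 0).mono fun _ => .inl

theorem eventually_notMem_carrier_atTop : ∀ᶠ x in atTop, x ∉ C.carrier := by
  filter_upwards [eventually_ge_atTop 0, eventually_all.2 fun i => eventually_ge_atTop (C.b i)]
    with x hx0 hxb hx
  rcases hx with hx | hx
  · exact hx0.not_gt hx
  · obtain ⟨i, hi⟩ := mem_iUnion.1 hx
    exact (hxb i).not_gt hi.2

end Config

/-- If `0 ≤ δ` and `4δ³ + 2δ² + 3δ < 1`, then every configuration `C` has an endpoint `c`
such that `δ ≤ λ(C | I_ω(c)) ≤ 1 - δ` for all `ω > 0`. -/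
theorem exists_good_endpoint (δ : ℝ) (hδ : 0 ≤ δ)
    (hcubic : 4 * δ ^ 3 + 2 * δ ^ 2 + 3 * δ < 1) (C : Config) :
    ∃ c ∈ C.endpoints, ∀ ω > 0,
      δ ≤ relMeasure C.carrier c ω ∧ relMeasure C.carrier c ω ≤ 1 - δ := by
  obtain ⟨c, hc, hgood⟩ := exists_good_endpoint_general hδ hcubic
    (C.finite_endpoints.subset C.frontier_carrier_subset_endpoints) C.eventually_mem_carrier_atBot
    C.eventually_notMem_carrier_atTop
  exact ⟨c, C.frontier_carrier_subset_endpoints hc, hgood⟩
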